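/- arXiv:math/0506393 — 13 statements merged into one kernel-verified Lean document; each statement's English description precedes it below -/
import Mathlib

section
/- Let R be an associative ring with 1 and let A, B, C, D ∈ R be such that the matrix S = [[A,B],[C,D]] is invertible in M₂(R). Then S satisfies the Yang–Baxter equation if and only if the following seven equations hold in R: (1) A = A² + BAC; (2) BA − AB = BAD; (3) CD − DC = CDA; (4) D = D² + CDB; (5) AC − CA = DAC; (6) DB − BD = ADB; (7) CB − BC = ADA − DAD. -/
/-- `S × id` for `S = [[A,B],[C,D]]`. -/
def SxId {R : Type*} [Ring R] (A B C D : R) : Matrix (Fin 3) (Fin 3) R :=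
  !![A, B, 0; C, D, 0; 0, 0, 1]

/-- `id × S` for `S = [[A,B],[C,D]]`. -/
def IdxS {R : Type*} [Ring R] (A B C D : R) : Matrix (Fin 3) (Fin 3) R :=
  !![1, 0, 0; 0, A, B; 0, C, D]

/-- `S` satisfies the (set theoretic, linear) Yang–Baxter equation. -/
def YangBaxter {R : Type*} [Ring R] (A B C D : R) : Prop :=
  SxId A B C D * IdxS A B C D * SxId A B C D =
    IdxS A B C D * SxId A B C D * IdxS A B C D

/-- An invertible `S = [[A,B],[C,D]]` satisfies the Yang–Baxter equation iff the
seven listed equations hold in `R`. -/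
theorem yangBaxter_iff_seven_equations {R : Type*} [Ring R] (A B C D : R)
    (hS : IsUnit (!![A, B; C, D] : Matrix (Fin 2) (Fin 2) R)) :
    YangBaxter A B C D ↔
      (A = A ^ 2 + B * A * C ∧
       B * A - A * B = B * A * D ∧
       C * D - D * C = C * D * A ∧
       D = D ^ 2 + C * D * B ∧
       A * C - C * A = D * A * C ∧
       D * B - B * D = A * D * B ∧
       C * B - B * C = A * D * A - D * A * D) := by
  -- The `(0, 2)` and `(2, 0)` entries are `B * B` and `C * C` on both sides; the other seven
  -- entries are, up to rearranging sums, the seven equations.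
  simp only [YangBaxter, SxId, IdxS, ← Matrix.ext_iff, Fin.forall_fin_succ, Matrix.mul_apply,
    Fin.sum_univ_succ]
  simp [pow_two, mul_assoc]
  constructor
  · rintro h
    grind
  · rintro h
    grind
end

section
/- Let R be an associative ring with 1 and let B, C be invertible elements of R with BC = CB. Then the Alexander matrix S = [[0, B],[C, 1 − BC]] is invertible in M₂(R) and satisfies the Yang–Baxter equation; that is, S is a switch. -/
/-- The Alexander matrix `[[0, B],[C, 1 − BC]]`, for commuting invertible `B, C`, is a
switch: it is invertible in `M₂(R)` and satisfies the Yang–Baxter equation. -/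
theorem alexander_is_switch {R : Type*} [Ring R] (B C : R)
    (hB : IsUnit B) (hC : IsUnit C) (hBC : B * C = C * B) :
    IsUnit (!![0, B; C, 1 - B * C] : Matrix (Fin 2) (Fin 2) R) ∧
      YangBaxter (0 : R) B C (1 - B * C) := by
  refine ⟨?_, ?_⟩
  · obtain ⟨b, rfl⟩ := hB
    obtain ⟨c, rfl⟩ := hC
    -- The inverse comes from solving `b y = u`, `c x + (1 - b c) y = v` for `x` and `y`.
    refine isUnit_iff_exists.mpr
      ⟨!![-(↑c⁻¹ * (1 - b * c) * ↑b⁻¹), ↑c⁻¹; ↑b⁻¹, 0], ?_, ?_⟩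
    · ext i j
      fin_cases i <;> fin_cases j <;> simp [Matrix.mul_apply, Fin.sum_univ_two, ← mul_assoc]
    · ext i j
      fin_cases i <;> fin_cases j <;> simp [Matrix.mul_apply, Fin.sum_univ_two, mul_assoc]
  · have h : Commute B C := hBC
    have hDB : (1 - B * C) * B = B * (1 - B * C) :=
      ((Commute.one_left B).sub_left ((Commute.refl B).mul_left h.symm)).eq
    have hCD : C * (1 - B * C) = (1 - B * C) * C :=
      ((Commute.one_right C).sub_right (h.symm.mul_right (Commute.refl C))).eq
    have hD : 1 - B * C = C * (1 - B * C) * B + (1 - B * C) * (1 - B * C) := by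
      rw [hCD, mul_assoc, ← hBC, ← mul_add, add_sub_cancel, mul_one]
    -- Entrywise, the equation reduces to these three identities and `B * C = C * B`.
    unfold YangBaxter SxId IdxS
    ext i j
    fin_cases i <;> fin_cases j <;> simp [Matrix.mul_apply, Fin.sum_univ_three] <;>
      first | exact hDB | exact hCD | exact hD | exact hBC.symm
end

section
/- Let R be an associative ring with 1 and let A, B be units of R such that A − 1 is also a unit and A⁻¹B⁻¹AB − BA⁻¹B⁻¹A = B⁻¹AB − A. Set C = A⁻¹B⁻¹A(1 − A) and D = 1 − A⁻¹B⁻¹AB. Then the matrix S = [[A, B],[C, D]] is invertible in M₂(R) and satisfies the Yang–Baxter equation; that is, S is a switch. -/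
/-- A `2 × 2` matrix over a ring is invertible if its upper left entry `A` and the Schur
complement `U = D - CA⁻¹B` are; here `a = A⁻¹` and `V = U⁻¹`. -/
theorem isUnit_of_schur {R : Type*} [Ring R] {A B C D a U V : R}
    (hAa : A * a = 1) (haA : a * A = 1) (hUV : U * V = 1) (hVU : V * U = 1)
    (hU : D = U + C * a * B) :
    IsUnit (!![A, B; C, D] : Matrix (Fin 2) (Fin 2) R) := by
  subst hU
  have hAa' : ∀ x, A * (a * x) = x := fun x => by rw [← mul_assoc, hAa, one_mul]
  have hUV' : ∀ x, U * (V * x) = x := fun x => by rw [← mul_assoc, hUV, one_mul]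
  rw [isUnit_iff_exists]
  refine ⟨!![a + a * B * V * C * a, -(a * B * V); -(V * C * a), V], ?_, ?_⟩
  · ext i j
    fin_cases i <;> fin_cases j <;>
      simp [Matrix.mul_apply, Fin.sum_univ_two, mul_add, add_mul, mul_assoc, hAa, hAa', hUV, hUV']
  · ext i j
    fin_cases i <;> fin_cases j <;>
      simp [Matrix.mul_apply, Fin.sum_univ_two, mul_add, add_mul, mul_assoc, haA, hVU]
    abel

/-- The Yang–Baxter equation for `C = Y(1 - A)`, `D = 1 - YB`, from `BAY = A` and the
fundamental equation in the form `(1 - A)(1 - YB) = 1 - BY`. -/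
theorem yangBaxter_of_reduced {R : Type*} [Ring R] {A B Y : R}
    (hY : B * A * Y = A) (hF : (1 - A) * (1 - Y * B) = 1 - B * Y) :
    YangBaxter A B (Y * (1 - A)) (1 - Y * B) := by
  have h00 : A * A + B * A * (Y * (1 - A)) = A := by
    rw [← mul_assoc, hY]; noncomm_ring
  have h01 : A * B + B * A * (1 - Y * B) = B * A := by
    rw [mul_sub, ← mul_assoc (B * A), hY]; noncomm_ring
  have h10 : Y * (1 - A) * A + (1 - Y * B) * A * (Y * (1 - A)) = A * (Y * (1 - A)) := by
    linear_combination (norm := noncomm_ring) -(Y * hY * (1 - A))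
  have h11 : Y * (1 - A) * B + (1 - Y * B) * A * (1 - Y * B)
      = A * (1 - Y * B) * A + B * (Y * (1 - A)) := by
    linear_combination (norm := noncomm_ring) Y * hY * B + hF * A - hF
  have h12 : (1 - Y * B) * B = A * (1 - Y * B) * B + B * (1 - Y * B) := by
    linear_combination (norm := noncomm_ring) hF * B
  have h21 : Y * (1 - A) * (1 - Y * B)
      = Y * (1 - A) * (1 - Y * B) * A + (1 - Y * B) * (Y * (1 - A)) := by
    linear_combination (norm := noncomm_ring) Y * hF * (1 - A)
  have h22 : 1 - Y * B = Y * (1 - A) * (1 - Y * B) * B + (1 - Y * B) * (1 - Y * B) := by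
    linear_combination (norm := noncomm_ring) -(Y * hF * B)
  unfold YangBaxter SxId IdxS
  generalize Y * (1 - A) = C at *
  generalize 1 - Y * B = D at *
  ext i j
  fin_cases i <;> fin_cases j <;>
    simp [Matrix.mul_apply, Fin.sum_univ_three] <;> assumption

/-- If units `A, B` with `A - 1` a unit satisfy the fundamental equation, then the
non-commuting matrix `S = [[A,B],[C,D]]` with `C = A⁻¹B⁻¹A(1-A)`, `D = 1 - A⁻¹B⁻¹AB`
is a switch: invertible in `M₂(R)` and satisfying the Yang–Baxter equation. -/
theorem noncommuting_is_switch {R : Type*} [Ring R] (A B : Rˣ)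
    (hA1 : IsUnit ((A : R) - 1))
    (hfund : (↑A⁻¹ * ↑B⁻¹ * ↑A * ↑B - ↑B * ↑A⁻¹ * ↑B⁻¹ * ↑A : R) =
      ↑B⁻¹ * ↑A * ↑B - ↑A)
    (C D : R)
    (hC : C = ↑A⁻¹ * ↑B⁻¹ * ↑A * (1 - ↑A))
    (hD : D = 1 - ↑A⁻¹ * ↑B⁻¹ * ↑A * ↑B) :
    IsUnit (!![(A : R), (B : R); C, D] : Matrix (Fin 2) (Fin 2) R) ∧
      YangBaxter (A : R) (B : R) C D := by
  subst hC hD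
  constructor
  · obtain ⟨W, hW⟩ := hA1
    -- The Schur complement is `1 - A⁻¹ = A⁻¹ W`, with inverse `W⁻¹ A`, where `W = A - 1`.
    have hW1 : (↑A⁻¹ : R) * W = 1 - ↑A⁻¹ := by rw [hW, mul_sub]; simp
    refine isUnit_of_schur (a := ↑A⁻¹) (U := ↑A⁻¹ * ↑W) (V := ↑W⁻¹ * ↑A) (by simp) (by simp)
      (by simp [mul_assoc]) (by simp [mul_assoc]) ?_
    rw [hW1]
    simp [mul_sub, sub_mul, mul_assoc]
  · refine yangBaxter_of_reduced (R := R) (A := A) (B := B) (by simp [mul_assoc]) ?_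
    have hAY : (↑A * (↑A⁻¹ * ↑B⁻¹ * ↑A) * ↑B : R) = ↑B⁻¹ * ↑A * ↑B := by simp [mul_assoc]
    have hBY : (↑B * (↑A⁻¹ * ↑B⁻¹ * ↑A) : R) = ↑B * ↑A⁻¹ * ↑B⁻¹ * ↑A := by simp [mul_assoc]
    rw [← hBY, ← hAY] at hfund
    generalize (↑A⁻¹ * ↑B⁻¹ * ↑A : R) = Y at *
    generalize (A : R) = A at *
    generalize (B : R) = B at *
    linear_combination (norm := noncomm_ring) -hfund
end

section
/- Let R be an associative ring with 1, let S = [[A,B],[C,D]] be a 2×2 matrix over R that is invertible in M₂(R) and satisfies the Yang–Baxter equation, and let t be a unit of R lying in the center of R. Then the augmented matrix S(t) = [[A, tB],[t⁻¹C, D]] is also invertible in M₂(R) and satisfies the Yang–Baxter equation. -/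
/-- The diagonal matrix `diag(1, t, …, t^(n-1))`, as a unit of the matrix ring. -/
def powDiag {R : Type*} [Ring R] (n : ℕ) (t : Rˣ) : (Matrix (Fin n) (Fin n) R)ˣ where
  val := Matrix.diagonal fun i => ((t ^ (i : ℕ) : Rˣ) : R)
  inv := Matrix.diagonal fun i => (((t ^ (i : ℕ))⁻¹ : Rˣ) : R)
  val_inv := by simp only [Matrix.diagonal_mul_diagonal, Units.mul_inv, Matrix.diagonal_one]
  inv_val := by simp only [Matrix.diagonal_mul_diagonal, Units.inv_mul, Matrix.diagonal_one]

theorem eq_powDiag_conj {R : Type*} [Ring R] {n : ℕ} (t : Rˣ) (M N : Matrix (Fin n) (Fin n) R)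
    (h : ∀ i j : Fin n, ((t ^ (i : ℕ) : Rˣ) : R) * N i j = M i j * ((t ^ (j : ℕ) : Rˣ) : R)) :
    N = (powDiag n t)⁻¹.val * M * (powDiag n t).val := by
  rw [mul_assoc, Units.eq_inv_mul_iff_mul_eq]
  ext i j
  simpa only [powDiag, Matrix.diagonal_mul, Matrix.mul_diagonal] using h i j

/-- If `S = [[A,B],[C,D]]` is a switch and `t` is a central unit, then the augmented
matrix `S(t) = [[A, tB],[t⁻¹C, D]]` is also a switch. -/
theorem augmented_is_switch {R : Type*} [Ring R] (A B C D : R) (t : Rˣ)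
    (ht : (t : R) ∈ Set.center R)
    (hSunit : IsUnit (!![A, B; C, D] : Matrix (Fin 2) (Fin 2) R))
    (hSYB : YangBaxter A B C D) :
    IsUnit (!![A, (t : R) * B; (↑t⁻¹ : R) * C, D] : Matrix (Fin 2) (Fin 2) R) ∧
      YangBaxter A ((t : R) * B) ((↑t⁻¹ : R) * C) D := by
  have hc : ∀ x : R, (t : R) * x = x * t := fun x => (Set.mem_center_iff.1 ht).comm x
  have hc2 : ∀ x : R, (t : R) ^ 2 * x = x * (t : R) ^ 2 := fun x =>
    Commute.pow_left (hc x) 2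
  -- The off-diagonal intertwining identities in the rows and columns with index `1` and `2`.
  have hB : (t : R) * (t * B) = B * (t : R) ^ 2 := by rw [← hc2, pow_two, mul_assoc]
  have hC : (t : R) ^ 2 * (↑t⁻¹ * C) = C * t := by
    rw [pow_two, mul_assoc, Units.mul_inv_cancel_left, hc]
  have h2 : (!![A, (t : R) * B; (↑t⁻¹ : R) * C, D] : Matrix (Fin 2) (Fin 2) R) =
      (powDiag 2 t)⁻¹.val * !![A, B; C, D] * (powDiag 2 t).val := by
    apply eq_powDiag_conj
    intro i j
    fin_cases i <;> fin_cases j <;> simp [hc B, hc D]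
  have h3 : SxId A ((t : R) * B) ((↑t⁻¹ : R) * C) D =
      (powDiag 3 t)⁻¹.val * SxId A B C D * (powDiag 3 t).val := by
    apply eq_powDiag_conj
    intro i j
    fin_cases i <;> fin_cases j <;> simp [SxId, hc B, hc D]
  have h3' : IdxS A ((t : R) * B) ((↑t⁻¹ : R) * C) D =
      (powDiag 3 t)⁻¹.val * IdxS A B C D * (powDiag 3 t).val := by
    apply eq_powDiag_conj
    intro i j
    fin_cases i <;> fin_cases j <;> simp [IdxS, hc A, hc2 D, hB, hC]
  constructor
  · rw [h2]
    exact ((powDiag 2 t)⁻¹.isUnit.mul hSunit).mul (powDiag 2 t).isUnit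
  · unfold YangBaxter at hSYB ⊢
    have hconj : ∀ X Y Z : Matrix (Fin 3) (Fin 3) R,
        ((powDiag 3 t)⁻¹.val * X * (powDiag 3 t).val) *
          ((powDiag 3 t)⁻¹.val * Y * (powDiag 3 t).val) *
          ((powDiag 3 t)⁻¹.val * Z * (powDiag 3 t).val) =
        (powDiag 3 t)⁻¹.val * (X * Y * Z) * (powDiag 3 t).val := by
      intro X Y Z
      simp only [mul_assoc, Units.mul_inv_cancel_left]
    rw [h3, h3', hconj, hconj, hSYB]
end

section
/- Let R be an associative ring with 1, let A, B be units of R with A − 1 a unit, satisfying the fundamental equation A⁻¹B⁻¹AB − BA⁻¹B⁻¹A = B⁻¹AB − A, and set C = A⁻¹B⁻¹A(1 − A), D = 1 − A⁻¹B⁻¹AB, S = [[A,B],[C,D]], Q = (1 − A)(1 − D), and S' = [[0, 1],[Q, 1 − Q]] (the Burau switch). Fix n ≥ 2. For 0 ≤ i ≤ n − 2 and a 2×2 matrix X over R, let σ_i(X) denote the n×n matrix over R agreeing with the identity matrix except that its 2×2 block in rows and columns i, i+1 equals X. Let M be the n×n matrix over R (rows and columns indexed 0,…,n−1) whose row 0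 is (1, 0, …, 0), and whose row r for r ≥ 1 has entry A in column 0, entry BʲA in column j for 1 ≤ j ≤ r−1, entry Bʳ in column r, and 0 in columns j > r. Then M is invertible in Mₙ(R) and M·σ_i(S) = σ_i(S')·M for every 0 ≤ i ≤ n − 2. -/
/-!
Two facts carry the proof.

* `M` is lower triangular with the units `B ^ r` on its diagonal, so it factors as an invertible
  diagonal matrix times `1 + N` with `N` strictly lower triangular, hence nilpotent
  (`isUnit_of_lowerTriangular`). This works over any ring, commutative or not.
* Right multiplication by `σ_i(S)` touches only columns `i, i + 1`, and left multiplication by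
  `σ_i(S')` only rows `i, i + 1`, so the intertwining relation can be compared entry by entry
  (`mul_braidGen_apply`, `braidGen_mul_apply`). The fundamental equation enters through
  `Q = A⁻¹B⁻¹AB - B⁻¹AB = BA⁻¹B⁻¹A - A`, the middle and right-hand terms being conjugate by `B`;
  thus `Q` commutes with `B`, and the powers of `B` in `M` can be moved past it. What is
  left are four identities in `A, B, C, D, Q`.
-/

/-- The `n × n` matrix agreeing with the identity except that its `2 × 2` block in
rows and columns `i, i+1` equals `X`. This is the image of the braid generator
`σ_i` under the representation induced by the `2 × 2` matrix `X`. -/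
def braidGen {R : Type*} [Ring R] (n i : ℕ) (X : Matrix (Fin 2) (Fin 2) R) :
    Matrix (Fin n) (Fin n) R := fun r c =>
  if (r : ℕ) = i ∧ (c : ℕ) = i then X 0 0
  else if (r : ℕ) = i ∧ (c : ℕ) = i + 1 then X 0 1
  else if (r : ℕ) = i + 1 ∧ (c : ℕ) = i then X 1 0
  else if (r : ℕ) = i + 1 ∧ (c : ℕ) = i + 1 then X 1 1
  else if r = c then 1 else 0

/-- The `k`-th power of a strictly lower triangular matrix is supported at distance at least `k`
below the diagonal. -/
lemma pow_apply_eq_zero_of_strictLower {R : Type*} [Ring R] {n : ℕ} (N : Matrix (Fin n) (Fin n) R)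
    (hN : ∀ r c : Fin n, (r : ℕ) ≤ c → N r c = 0) (k : ℕ) :
    ∀ r c : Fin n, (r : ℕ) < c + k → (N ^ k) r c = 0 := by
  induction k with
  | zero =>
    intro r c h
    rw [pow_zero, Matrix.one_apply_ne]
    rintro rfl
    omega
  | succ k ih =>
    intro r c h
    rw [pow_succ, Matrix.mul_apply]
    refine Finset.sum_eq_zero fun j _ => ?_
    by_cases hj : (j : ℕ) ≤ c
    · rw [hN j c hj, mul_zero]
    · rw [ih r j (by omega), zero_mul]

/-- A lower triangular matrix with unit diagonal entries is invertible, over any ring. -/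
lemma isUnit_of_lowerTriangular {R : Type*} [Ring R] {n : ℕ} (M : Matrix (Fin n) (Fin n) R)
    (u : Fin n → Rˣ) (hdiag : ∀ r, M r r = u r)
    (hM : ∀ r c : Fin n, (r : ℕ) < c → M r c = 0) : IsUnit M := by
  let E : (Matrix (Fin n) (Fin n) R)ˣ :=
    { val := Matrix.diagonal fun r => (u r : R)
      inv := Matrix.diagonal fun r => (↑(u r)⁻¹ : R)
      val_inv := by simp
      inv_val := by simp }
  let N : Matrix (Fin n) (Fin n) R := (↑E⁻¹ : Matrix (Fin n) (Fin n) R) * M - 1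
  have hN : ∀ r c : Fin n, (r : ℕ) ≤ c → N r c = 0 := by
    intro r c h
    have hrc : N r c = ↑(u r)⁻¹ * M r c - (1 : Matrix (Fin n) (Fin n) R) r c := by
      change (Matrix.diagonal (fun r => (↑(u r)⁻¹ : R)) * M - 1) r c = _
      rw [Matrix.sub_apply, Matrix.diagonal_mul]
    rw [hrc]
    rcases h.lt_or_eq with h | h
    · rw [hM r c h, Matrix.one_apply_ne (by rintro rfl; omega)]
      simp
    · obtain rfl := Fin.ext h
      simp [hdiag]
  have hnil : IsNilpotent N := by
    refine ⟨n, ?_⟩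
    ext r c
    exact pow_apply_eq_zero_of_strictLower N hN n r c (by omega)
  have hfac : M = (E : Matrix (Fin n) (Fin n) R) * (1 + N) := by
    simp [N]
  rw [hfac]
  exact E.isUnit.mul hnil.isUnit_one_add

/-- Right multiplication by `σ_i(X)` changes only columns `i` and `i + 1`. -/
lemma mul_braidGen_apply {R : Type*} [Ring R] {n i : ℕ} (hi : i < n) (hi' : i + 1 < n)
    (X : Matrix (Fin 2) (Fin 2) R) (M : Matrix (Fin n) (Fin n) R) (r c : Fin n) :
    (M * braidGen n i X) r c =
      if (c : ℕ) = i then M r ⟨i, hi⟩ * X 0 0 + M r ⟨i + 1, hi'⟩ * X 1 0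
      else if (c : ℕ) = i + 1 then M r ⟨i, hi⟩ * X 0 1 + M r ⟨i + 1, hi'⟩ * X 1 1
      else M r c := by
  have hne : (⟨i, hi⟩ : Fin n) ≠ ⟨i + 1, hi'⟩ := by simp
  rw [Matrix.mul_apply]
  split_ifs with h1 h2
  · rw [Fintype.sum_eq_add _ _ hne]
    · simp [braidGen, h1]
    · rintro j ⟨hj, hj'⟩
      simp only [ne_eq, Fin.ext_iff] at hj hj'
      have : (j : ℕ) ≠ c := by omega
      simp [braidGen, hj, hj', Fin.ext_iff, this]
  · rw [Fintype.sum_eq_add _ _ hne]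
    · simp [braidGen, h2]
    · rintro j ⟨hj, hj'⟩
      simp only [ne_eq, Fin.ext_iff] at hj hj'
      have : (j : ℕ) ≠ c := by omega
      simp [braidGen, hj, hj', Fin.ext_iff, this]
  · rw [Fintype.sum_eq_single c]
    · simp [braidGen, h1, h2]
    · intro j hj
      simp [braidGen, h1, h2, hj]

/-- Left multiplication by `σ_i(X)` changes only rows `i` and `i + 1`. -/
lemma braidGen_mul_apply {R : Type*} [Ring R] {n i : ℕ} (hi : i < n) (hi' : i + 1 < n)
    (X : Matrix (Fin 2) (Fin 2) R) (M : Matrix (Fin n) (Fin n) R) (r c : Fin n) :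
    (braidGen n i X * M) r c =
      if (r : ℕ) = i then X 0 0 * M ⟨i, hi⟩ c + X 0 1 * M ⟨i + 1, hi'⟩ c
      else if (r : ℕ) = i + 1 then X 1 0 * M ⟨i, hi⟩ c + X 1 1 * M ⟨i + 1, hi'⟩ c
      else M r c := by
  have hne : (⟨i, hi⟩ : Fin n) ≠ ⟨i + 1, hi'⟩ := by simp
  rw [Matrix.mul_apply]
  split_ifs with h1 h2
  · rw [Fintype.sum_eq_add _ _ hne]
    · simp [braidGen, h1]
    · rintro j ⟨hj, hj'⟩
      simp only [ne_eq, Fin.ext_iff] at hj hj'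
      have : (r : ℕ) ≠ j := by omega
      simp [braidGen, hj, hj', Fin.ext_iff, this]
  · rw [Fintype.sum_eq_add _ _ hne]
    · simp [braidGen, h2]
    · rintro j ⟨hj, hj'⟩
      simp only [ne_eq, Fin.ext_iff] at hj hj'
      have : (r : ℕ) ≠ j := by omega
      simp [braidGen, hj, hj', Fin.ext_iff, this]
  · rw [Fintype.sum_eq_single r]
    · simp [braidGen, h1, h2]
    · intro j hj
      simp [braidGen, h1, h2, hj.symm]

/-- The representation of the braid group induced by a non-commuting switch is
conjugate, via the explicit matrix `M`, to the one induced by the Burau switch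
`S' = [[0,1],[Q,1-Q]]` where `Q = (1-A)(1-D)`. -/
theorem conjugate_to_burau {R : Type*} [Ring R] (A B : Rˣ)
    (hA1 : IsUnit ((A : R) - 1))
    (hfund : (↑A⁻¹ * ↑B⁻¹ * ↑A * ↑B - ↑B * ↑A⁻¹ * ↑B⁻¹ * ↑A : R) =
      ↑B⁻¹ * ↑A * ↑B - ↑A)
    (C D Q : R)
    (hC : C = ↑A⁻¹ * ↑B⁻¹ * ↑A * (1 - ↑A))
    (hD : D = 1 - ↑A⁻¹ * ↑B⁻¹ * ↑A * ↑B)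
    (hQ : Q = (1 - (A : R)) * (1 - D))
    (n : ℕ) (hn : 2 ≤ n)
    (M : Matrix (Fin n) (Fin n) R)
    (hM : ∀ r c : Fin n,
      M r c = if (c : ℕ) < (r : ℕ) then (B : R) ^ (c : ℕ) * (A : R)
        else if (c : ℕ) = (r : ℕ) then (B : R) ^ (r : ℕ) else 0) :
    IsUnit M ∧
      ∀ i : ℕ, i ≤ n - 2 →
        M * braidGen n i !![(A : R), (B : R); C, D] =
          braidGen n i !![(0 : R), 1; Q, 1 - Q] * M := by
  refine ⟨isUnit_of_lowerTriangular M (fun r => B ^ (r : ℕ)) (fun r => by simp [hM])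
    (fun r c h => by rw [hM, if_neg (by omega), if_neg (by omega)]), fun i hi => ?_⟩
  -- The two expressions for `Q` that the fundamental equation identifies.
  have hQ1 : Q = ↑A⁻¹ * ↑B⁻¹ * ↑A * ↑B - ↑B⁻¹ * ↑A * ↑B := by
    rw [hQ, hD]
    simp [sub_mul, mul_assoc]
  have hQ2 : Q = ↑B * ↑A⁻¹ * ↑B⁻¹ * ↑A - ↑A := by
    rw [hQ1, sub_eq_sub_iff_sub_eq_sub, hfund]
  have hBQ : Commute Q ((B : R) ^ i) := by
    refine Commute.pow_right ?_ i
    have h : Q * (B : R) = B * Q := by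
      conv_lhs => rw [hQ2]
      rw [hQ1]
      simp [sub_mul, mul_sub, mul_assoc]
    exact h
  have e1 : (A : R) * A + B * C = Q + (1 - Q) * A := by
    have h : (B : R) * C = (Q + A) * (1 - A) := by
      rw [hC, hQ2]
      simp [mul_assoc]
    rw [h]
    noncomm_ring
  have e2 : (A : R) * B + B * D = (1 - Q) * B := by
    rw [hD, hQ2]
    simp only [mul_sub, sub_mul, mul_one, one_mul, mul_assoc]
    abel
  have e3 : (A : R) * A + B * (A * C) = A := by
    rw [hC]
    simp [mul_sub, mul_assoc]
  have e4 : (A : R) * B + B * (A * D) = B * A := by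
    rw [hD]
    simp [mul_sub, mul_assoc]
  have hi1 : i < n := by omega
  have hi2 : i + 1 < n := by omega
  ext r c
  rw [mul_braidGen_apply hi1 hi2, braidGen_mul_apply hi1 hi2]
  simp only [hM, Matrix.of_apply, Matrix.cons_val', Matrix.cons_val_zero, Matrix.cons_val_one,
    Matrix.cons_val_fin_one]
  rcases lt_trichotomy (r : ℕ) i with hr | hr | hr
  · -- Above row `i`, both sides are the corresponding entry of `M`.
    have a1 : ¬ i < (r : ℕ) := by omega
    have a2 : ¬ i = (r : ℕ) := by omega
    have a3 : ¬ i + 1 < (r : ℕ) := by omega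
    have a4 : ¬ i + 1 = (r : ℕ) := by omega
    have a5 : ¬ (r : ℕ) = i := by omega
    have a6 : ¬ (r : ℕ) = i + 1 := by omega
    simp only [a1, a2, a3, a4, a5, a6, if_false, zero_mul, add_zero]
    split_ifs <;> first | rfl | omega
  · -- Row `i` of the product is row `i + 1` of `M`.
    rcases lt_trichotomy (c : ℕ) i with hc | hc | hc
    · have b1 : ¬ (c : ℕ) = i := by omega
      have b2 : ¬ (c : ℕ) = i + 1 := by omega
      have b3 : (c : ℕ) < i + 1 := by omega
      simp [hr, hc, b1, b2, b3]
    · simp [hr, hc]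
    · by_cases hc' : (c : ℕ) = i + 1
      · simp [hr, hc', pow_succ]
      · have b1 : ¬ (c : ℕ) = i := by omega
        have b2 : ¬ (c : ℕ) < i := by omega
        have b3 : ¬ (c : ℕ) < i + 1 := by omega
        simp [hr, hc', b1, b2, b3]
  · by_cases hr' : (r : ℕ) = i + 1
    · rcases lt_trichotomy (c : ℕ) i with hc | hc | hc
      · -- Rows `i` and `i + 1` of `M` agree here, and `Q + (1 - Q) = 1`.
        have b1 : ¬ (c : ℕ) = i := by omega
        have b2 : ¬ (c : ℕ) = i + 1 := by omega
        have b3 : (c : ℕ) < i + 1 := by omega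
        simp only [hr', hc, b1, b2, b3, if_true, if_false, Nat.succ_ne_self]
        rw [← add_mul, add_sub_cancel, one_mul]
      · have key : (B : R) ^ i * A * A + (B : R) ^ (i + 1) * C =
            Q * (B : R) ^ i + (1 - Q) * ((B : R) ^ i * A) := by
          calc (B : R) ^ i * A * A + (B : R) ^ (i + 1) * C
              = (B : R) ^ i * (A * A + B * C) := by
                rw [pow_succ]; noncomm_ring
            _ = (B : R) ^ i * Q + ((B : R) ^ i * A - (B : R) ^ i * Q * A) := by
                rw [e1]; noncomm_ring
            _ = _ := by rw [← hBQ.eq]; noncomm_ring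
        simpa [hr', hc] using key
      · by_cases hc' : (c : ℕ) = i + 1
        · have key : (B : R) ^ i * A * B + (B : R) ^ (i + 1) * D =
              (1 - Q) * (B : R) ^ (i + 1) := by
            calc (B : R) ^ i * A * B + (B : R) ^ (i + 1) * D
                = (B : R) ^ i * (A * B + B * D) := by
                  rw [pow_succ]; noncomm_ring
              _ = (B : R) ^ i * B - (B : R) ^ i * Q * B := by
                  rw [e2]; noncomm_ring
              _ = _ := by rw [← hBQ.eq, pow_succ]; noncomm_ring
          simpa [hr', hc'] using key
        · have b1 : ¬ (c : ℕ) = i := by omega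
          have b2 : ¬ (c : ℕ) < i := by omega
          have b3 : ¬ (c : ℕ) < i + 1 := by omega
          simp [hr', hc', b1, b2, b3]
    · -- Below row `i + 1`, the row vector `(BⁱA, Bⁱ⁺¹A)` is fixed by `S`.
      have a1 : ¬ (r : ℕ) = i := by omega
      have a3 : i + 1 < (r : ℕ) := by omega
      simp only [hr, a1, hr', a3, if_true, if_false]
      by_cases hc : (c : ℕ) = i
      · simp only [hc, hr, if_true]
        conv_rhs => rw [← e3]
        rw [pow_succ]
        noncomm_ring
      · by_cases hc' : (c : ℕ) = i + 1
        · simp only [hc', a3, if_true, Nat.succ_ne_self, if_false]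
          rw [pow_succ]
          conv_rhs => rw [mul_assoc, ← e4]
          noncomm_ring
        · simp only [hc, hc', if_false]
end

section
/- Let R be an associative ring with 1 and let A, B be units of R with A − 1 a unit, satisfying the fundamental equation A⁻¹B⁻¹AB − BA⁻¹B⁻¹A = B⁻¹AB − A. Set C = A⁻¹B⁻¹A(1 − A), D = 1 − A⁻¹B⁻¹AB and Q = (1 − A)(1 − D). Then Q commutes with B (QB = BQ) and A² + BC = Q + (1 − Q)A. -/
/-- If units `A, B` with `A - 1` a unit satisfy the fundamental equation, and
`C = A⁻¹B⁻¹A(1-A)`, `D = 1 - A⁻¹B⁻¹AB`, `Q = (1-A)(1-D)`, then `Q` commutes with `B`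
and `A² + BC = Q + (1-Q)A`. -/
theorem Q_commutes_and_key_identity {R : Type*} [Ring R] (A B : Rˣ)
    (hA1 : IsUnit ((A : R) - 1))
    (hfund : (↑A⁻¹ * ↑B⁻¹ * ↑A * ↑B - ↑B * ↑A⁻¹ * ↑B⁻¹ * ↑A : R) =
      ↑B⁻¹ * ↑A * ↑B - ↑A)
    (C D Q : R)
    (hC : C = ↑A⁻¹ * ↑B⁻¹ * ↑A * (1 - ↑A))
    (hD : D = 1 - ↑A⁻¹ * ↑B⁻¹ * ↑A * ↑B)
    (hQ : Q = (1 - (A : R)) * (1 - D)) :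
    Q * (B : R) = (B : R) * Q ∧
      (A : R) ^ 2 + (B : R) * C = Q + (1 - Q) * (A : R) := by
  -- The fundamental equation identifies two expressions for `Q`:
  -- `(A⁻¹ - 1)B⁻¹AB`, obtained by expanding `D`, and `BA⁻¹B⁻¹A - A`.
  have h1 : Q = ↑A⁻¹ * ↑B⁻¹ * ↑A * ↑B - ↑B⁻¹ * ↑A * ↑B := by
    rw [hQ, hD, sub_sub_cancel, sub_mul, one_mul]
    simp only [mul_assoc, Units.mul_inv_cancel_left]
  have h2 : Q = ↑B * ↑A⁻¹ * ↑B⁻¹ * ↑A - ↑A := by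
    rw [h1, ← sub_eq_zero, ← sub_eq_zero.mpr hfund]
    abel
  constructor
  -- Both sides equal `BA⁻¹B⁻¹AB - AB`.
  · calc Q * (B : R) = (↑B * ↑A⁻¹ * ↑B⁻¹ * ↑A - ↑A) * ↑B := by rw [← h2]
      _ = ↑B * (↑A⁻¹ * ↑B⁻¹ * ↑A * ↑B - ↑B⁻¹ * ↑A * ↑B) := by
        simp only [sub_mul, mul_sub, mul_assoc, Units.mul_inv_cancel_left]
      _ = ↑B * Q := by rw [← h1]
  -- `BC = (BA⁻¹B⁻¹A)(1 - A) = (Q + A)(1 - A)`.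
  · rw [hC, h2]
    noncomm_ring
end

section
/- Let F be a field of characteristic not 2, let λ, μ be nonzero elements of F, and let Q = (λ,μ / F) be the generalized quaternion algebra. The following are equivalent: (1) Q contains an isotropic element, i.e. there exists a nonzero A ∈ Q with N(A) = 0; (2) Q is not a division algebra, i.e. some nonzero element of Q is not a unit; (3) Q is isomorphic as an F-algebra to the matrix algebra M₂(F). -/
/-!
The identity `A * star A = star A * A = N(A)` shows that `A` is a unit exactly when `N(A) ≠ 0`, so
the first two conditions agree, and a zero divisor of `M₂(F)` transported along an isomorphism
gives the second condition from the third.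

The remaining implication rests on the fact that a nontrivial zero of the norm makes `c₂` a value
`p² - c₁ q²` of the norm form of `F(√c₁)`. The relation `N(A) = 0` says
`a₀² - c₁ a₁² = c₂ (a₂² - c₁ a₃²)`, and the form is multiplicative, so one divides unless
`a₂² - c₁ a₃² = 0`; in that case `c₁` is a nonzero square and the form, being hyperbolic, takes
every value. Given `p` and `q`, the matrices `I = !![0, c₁; 1, 0]` and `J = !![p, -c₁ q; q, -p]`
satisfy the defining relations of the quaternion algebra. The induced algebra map to `M₂(F)` is
injective because `2` and `c₂` are nonzero, hence bijective as both sides have dimension four.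
-/

open Quaternion

/-- The (quadratic-form) norm `N(A) = a₀² − λa₁² − μa₂² + λμa₃²` on the generalized
quaternion algebra `(λ,μ / F)`. -/
def quatNorm {F : Type*} [Field F] {c₁ c₂ : F} (A : ℍ[F, c₁, c₂]) : F :=
  A.re ^ 2 - c₁ * A.imI ^ 2 - c₂ * A.imJ ^ 2 + c₁ * c₂ * A.imK ^ 2

theorem mul_star_eq_quatNorm {F : Type*} [Field F] {c₁ c₂ : F} (A : ℍ[F, c₁, c₂]) :
    A * star A = algebraMap F _ (quatNorm A) := by
  ext <;> simp [quatNorm, QuaternionAlgebra.algebraMap_eq] <;> ring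

theorem star_mul_eq_quatNorm {F : Type*} [Field F] {c₁ c₂ : F} (A : ℍ[F, c₁, c₂]) :
    star A * A = algebraMap F _ (quatNorm A) := by
  ext <;> simp [quatNorm, QuaternionAlgebra.algebraMap_eq] <;> ring

theorem isUnit_iff_quatNorm_ne_zero {F : Type*} [Field F] {c₁ c₂ : F} {A : ℍ[F, c₁, c₂]}
    (hA : A ≠ 0) : IsUnit A ↔ quatNorm A ≠ 0 := by
  constructor
  · intro hu h
    have h1 := mul_star_eq_quatNorm A
    rw [h, map_zero, hu.mul_right_eq_zero, star_eq_zero] at h1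
    exact hA h1
  · intro h
    have hN : IsUnit (algebraMap F ℍ[F, c₁, c₂] (quatNorm A)) := (IsUnit.mk0 _ h).map _
    have hc : Commute A (star A) := (mul_star_eq_quatNorm A).trans (star_mul_eq_quatNorm A).symm
    rw [← mul_star_eq_quatNorm, hc.isUnit_mul_iff] at hN
    exact hN.1

/-- When `c₁` is a nonzero square, the form `p² - c₁ q²` is a hyperbolic plane, so it takes
every value. -/
theorem exists_eq_sq_sub_of_isSquare {F : Type*} [Field F] (h2 : (2 : F) ≠ 0) {s : F}
    (hs : s ≠ 0) (c₂ : F) : ∃ p q : F, c₂ = p ^ 2 - s ^ 2 * q ^ 2 := by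
  refine ⟨(c₂ + 1) / 2, (c₂ - 1) / (2 * s), ?_⟩
  field_simp
  ring

theorem exists_eq_sq_sub_of_isotropic {F : Type*} [Field F] (h2 : (2 : F) ≠ 0)
    {c₁ c₂ : F} (hc₁ : c₁ ≠ 0) {A : ℍ[F, c₁, c₂]} (hA : A ≠ 0) (hN : quatNorm A = 0) :
    ∃ p q : F, c₂ = p ^ 2 - c₁ * q ^ 2 := by
  obtain ⟨a, b, c, d⟩ := A
  simp only [quatNorm] at hN
  -- A nontrivial zero of `x² - c₁ y²` exhibits `c₁` as the square of `x / y`.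
  have key : ∀ x y : F, y ≠ 0 → x ^ 2 - c₁ * y ^ 2 = 0 →
      ∃ p q : F, c₂ = p ^ 2 - c₁ * q ^ 2 := by
    intro x y hy hxy
    have e : c₁ = (x / y) ^ 2 := by
      field_simp
      linear_combination -hxy
    have hs : x / y ≠ 0 := by
      intro h0
      rw [h0] at e
      exact hc₁ (by simpa using e)
    rw [e]
    exact exists_eq_sq_sub_of_isSquare h2 hs c₂
  by_cases hn : c ^ 2 - c₁ * d ^ 2 = 0
  · by_cases hd : d = 0
    · by_cases hb : b = 0
      · have hc : c = 0 := by simpa [hd] using hn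
        have ha : a = 0 := by simpa [hd, hb, hc] using hN
        subst ha hb hc hd
        exact (hA rfl).elim
      · exact key a b hb (by linear_combination hN + c₂ * hn)
    · exact key c d hd hn
  · -- `p + q√c₁` is the quotient of `a + b√c₁` by `c + d√c₁`.
    refine ⟨(a * c - c₁ * b * d) / (c ^ 2 - c₁ * d ^ 2), (b * c - a * d) / (c ^ 2 - c₁ * d ^ 2), ?_⟩
    field_simp
    linear_combination (-(c ^ 2 - c₁ * d ^ 2)) * hN

/-- The quaternion basis of `M₂(F)` in which `i` is the companion matrix of `X² - c₁` and `j` is a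
trace-zero matrix of determinant `-(p² - c₁ q²)` anticommuting with it. -/
def matrixQuaternionBasis {F : Type*} [Field F] {c₁ c₂ p q : F} (h : c₂ = p ^ 2 - c₁ * q ^ 2) :
    QuaternionAlgebra.Basis (Matrix (Fin 2) (Fin 2) F) c₁ 0 c₂ where
  i := !![0, c₁; 1, 0]
  j := !![p, -(c₁ * q); q, -p]
  k := !![c₁ * q, -(c₁ * p); p, -(c₁ * q)]
  i_mul_i := by
    ext i j; fin_cases i <;> fin_cases j <;> simp [Matrix.mul_apply, Fin.sum_univ_two]
  j_mul_j := by
    subst h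
    ext i j; fin_cases i <;> fin_cases j <;> simp [Matrix.mul_apply, Fin.sum_univ_two] <;> ring
  i_mul_j := by
    ext i j; fin_cases i <;> fin_cases j <;> simp [Matrix.mul_apply, Fin.sum_univ_two]
  j_mul_i := by
    ext i j; fin_cases i <;> fin_cases j <;> simp [Matrix.mul_apply, Fin.sum_univ_two] <;> ring

theorem liftHom_matrixQuaternionBasis_injective {F : Type*} [Field F] (h2 : (2 : F) ≠ 0)
    {c₁ c₂ p q : F} (hc₁ : c₁ ≠ 0) (hc₂ : c₂ ≠ 0) (h : c₂ = p ^ 2 - c₁ * q ^ 2) :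
    Function.Injective (matrixQuaternionBasis h).liftHom := by
  rw [injective_iff_map_eq_zero]
  rintro ⟨x, y, z, w⟩ hx
  have e (i j : Fin 2) := congrFun (congrFun hx i) j
  have e00 := e 0 0
  have e01 := e 0 1
  have e10 := e 1 0
  have e11 := e 1 1
  simp [QuaternionAlgebra.Basis.liftHom, QuaternionAlgebra.Basis.lift, matrixQuaternionBasis,
    Matrix.algebraMap_matrix_apply] at e00 e01 e10 e11
  have hx0 : x = 0 := (mul_eq_zero_iff_left h2).1 (by linear_combination e00 + e11)
  have hy0 : y = 0 := (mul_eq_zero_iff_left (mul_ne_zero h2 hc₁)).1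
    (by linear_combination e01 + c₁ * e10)
  subst hx0 hy0
  -- The remaining two equations in `z, w` have determinant `p² - c₁ q² = c₂`.
  have hz : z = 0 := (mul_eq_zero_iff_left hc₂).1
    (by linear_combination z * h + p * e00 - c₁ * q * e10)
  have hw : w = 0 := (mul_eq_zero_iff_left hc₂).1
    (by linear_combination w * h + p * e10 - q * e00)
  subst hz hw
  rfl

/-- For a generalized quaternion algebra over a field of characteristic not 2 with
nonzero parameters, the following are equivalent: it contains a nonzero isotropic
element; it is not a division algebra; it is isomorphic to `M₂(F)`. -/
theorem quaternionAlgebra_hyperbolic_tfae {F : Type*} [Field F] (h2 : (2 : F) ≠ 0)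
    (c₁ c₂ : F) (hc₁ : c₁ ≠ 0) (hc₂ : c₂ ≠ 0) :
    List.TFAE
      [(∃ A : ℍ[F, c₁, c₂], A ≠ 0 ∧ quatNorm A = 0),
       (∃ A : ℍ[F, c₁, c₂], A ≠ 0 ∧ ¬IsUnit A),
       Nonempty (ℍ[F, c₁, c₂] ≃ₐ[F] Matrix (Fin 2) (Fin 2) F)] := by
  tfae_have 1 ↔ 2 := exists_congr fun A => and_congr_right fun hA => by
    rw [isUnit_iff_quatNorm_ne_zero hA, not_not]
  tfae_have 1 → 3 := by
    rintro ⟨A, hA, hN⟩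
    obtain ⟨p, q, h⟩ := exists_eq_sq_sub_of_isotropic h2 hc₁ hA hN
    have hinj := liftHom_matrixQuaternionBasis_injective h2 hc₁ hc₂ h
    have hdim : Module.finrank F ℍ[F, c₁, c₂] =
        Module.finrank F (Matrix (Fin 2) (Fin 2) F) := by
      rw [QuaternionAlgebra.finrank_eq_four, Module.finrank_matrix]
      simp
    have hsurj := (LinearMap.injective_iff_surjective_of_finrank_eq_finrank
      (f := (matrixQuaternionBasis h).liftHom.toLinearMap) hdim).1 hinj
    exact ⟨AlgEquiv.ofBijective _ ⟨hinj, hsurj⟩⟩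
  tfae_have 3 → 2 := by
    rintro ⟨e⟩
    refine ⟨e.symm !![1, 0; 0, 0], ?_, ?_⟩
    · rw [Ne, EmbeddingLike.map_eq_zero_iff]
      intro h
      simpa using congrFun (congrFun h 0) 0
    · rw [MulEquiv.isUnit_map, Matrix.isUnit_iff_isUnit_det]
      simp
  tfae_finish
end

section
/- Let F be a field of characteristic not 2, let λ, μ be nonzero elements of F, and let a, b be pure quaternions in (λ,μ / F). Then the three quaternions a, b, a×b are linearly dependent over F if and only if N(a)N(b) = (a·b)², and this holds if and only if N(a×b) = 0 (i.e. a×b is isotropic or zero). -/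
/-!
Write `λ = c₁`, `μ = c₂`. For pure `a, b` the Lagrange identity `N(a×b) = N(a)N(b) − (a·b)²` holds,
which gives the second equivalence. For the first, `a, b, a×b` all lie in the three-dimensional
space of pure quaternions, so they are independent iff the determinant of their `i, j, k`-coordinates
is nonzero. The coordinates of `a×b` are, up to the factors `−μ, −λ, 1`, the cofactors of the third
row, i.e. the signed 2×2 minors of the coordinates of `a` and `b`. Expanding the determinant along
this row gives `λμ · det(a, b, a×b) = N(a×b)`, and `λμ ≠ 0`.
-/

open Quaternion

/-- The cross product `a×b = ½(ab − ba)` of pure quaternions. -/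
def quatCross {F : Type*} [Field F] {c₁ c₂ : F} (a b : ℍ[F, c₁, c₂]) : ℍ[F, c₁, c₂] :=
  (2 : F)⁻¹ • (a * b - b * a)

/-- The dot product `a·b = −½(ab + ba)` of pure quaternions, as a scalar. -/
def quatDot {F : Type*} [Field F] {c₁ c₂ : F} (a b : ℍ[F, c₁, c₂]) : F :=
  -((2 : F)⁻¹ * (a * b + b * a).re)

/-- The embedding of coordinate space onto the pure quaternions, `v ↦ v₀ i + v₁ j + v₂ k`. -/
def pureEmb {F : Type*} [Field F] (c₁ c₂ : F) : (Fin 3 → F) →ₗ[F] ℍ[F, c₁, c₂] where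
  toFun v := ⟨0, v 0, v 1, v 2⟩
  map_add' v w := by ext <;> simp
  map_smul' r v := by ext <;> simp

/-- The `i, j, k`-coordinates of a quaternion. -/
def imCoords {F : Type*} [Field F] {c₁ c₂ : F} (A : ℍ[F, c₁, c₂]) : Fin 3 → F :=
  ![A.imI, A.imJ, A.imK]

lemma pureEmb_imCoords {F : Type*} [Field F] {c₁ c₂ : F} {A : ℍ[F, c₁, c₂]}
    (hA : A.re = 0) : pureEmb c₁ c₂ (imCoords A) = A := by
  ext <;> simp [pureEmb, imCoords, hA]

lemma linearIndependent_iff_det_ne_zero {F : Type*} [Field F] {c₁ c₂ : F}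
    {a b c : ℍ[F, c₁, c₂]} (ha : a.re = 0) (hb : b.re = 0) (hc : c.re = 0) :
    LinearIndependent F ![a, b, c] ↔
      (Matrix.of ![imCoords a, imCoords b, imCoords c]).det ≠ 0 := by
  have hker : LinearMap.ker (pureEmb c₁ c₂) = ⊥ := by
    rw [LinearMap.ker_eq_bot']
    intro v hv
    have hI := congrArg QuaternionAlgebra.imI hv
    have hJ := congrArg QuaternionAlgebra.imJ hv
    have hK := congrArg QuaternionAlgebra.imK hv
    funext t
    fin_cases t
    · exact hI
    · exact hJ
    · exact hK
  have hcomp : ![a, b, c] = pureEmb c₁ c₂ ∘ ![imCoords a, imCoords b, imCoords c] := by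
    funext t
    fin_cases t
    · exact (pureEmb_imCoords ha).symm
    · exact (pureEmb_imCoords hb).symm
    · exact (pureEmb_imCoords hc).symm
  rw [hcomp, LinearMap.linearIndependent_iff _ hker, ← isUnit_iff_ne_zero,
    ← Matrix.isUnit_iff_isUnit_det]
  exact Matrix.linearIndependent_rows_iff_isUnit
    (A := Matrix.of ![imCoords a, imCoords b, imCoords c])

/-- The commutator has no scalar part, for arbitrary `a` and `b`. -/
lemma quatCross_re {F : Type*} [Field F] {c₁ c₂ : F} (a b : ℍ[F, c₁, c₂]) :
    (quatCross a b).re = 0 := by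
  simp only [quatCross, QuaternionAlgebra.re_smul, QuaternionAlgebra.re_sub,
    QuaternionAlgebra.re_mul, smul_eq_mul]
  ring

/-- The Lagrange identity for the norm form. -/
lemma quatNorm_quatCross {F : Type*} [Field F] (h2 : (2 : F) ≠ 0) {c₁ c₂ : F}
    {a b : ℍ[F, c₁, c₂]} (ha : a.re = 0) (hb : b.re = 0) :
    quatNorm (quatCross a b) = quatNorm a * quatNorm b - quatDot a b ^ 2 := by
  simp [quatNorm, quatCross, quatDot, ha, hb]
  field_simp
  ring

lemma det_imCoords_quatCross {F : Type*} [Field F] (h2 : (2 : F) ≠ 0) {c₁ c₂ : F}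
    {a b : ℍ[F, c₁, c₂]} (ha : a.re = 0) (hb : b.re = 0) :
    c₁ * c₂ * (Matrix.of ![imCoords a, imCoords b, imCoords (quatCross a b)]).det =
      quatNorm (quatCross a b) := by
  simp [Matrix.det_fin_three, imCoords, quatNorm, quatCross, ha, hb]
  field_simp
  ring

/-- For pure quaternions `a, b`, the triple `a, b, a×b` is linearly dependent iff
`N(a)N(b) = (a·b)²`, which in turn holds iff `N(a×b) = 0`. -/
theorem dependent_iff_norm_eq_dot_sq {F : Type*} [Field F] (h2 : (2 : F) ≠ 0)
    (c₁ c₂ : F) (hc₁ : c₁ ≠ 0) (hc₂ : c₂ ≠ 0) (a b : ℍ[F, c₁, c₂])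
    (ha : a.re = 0) (hb : b.re = 0) :
    (¬LinearIndependent F ![a, b, quatCross a b] ↔
        quatNorm a * quatNorm b = quatDot a b ^ 2) ∧
      (quatNorm a * quatNorm b = quatDot a b ^ 2 ↔ quatNorm (quatCross a b) = 0) := by
  have hN := quatNorm_quatCross h2 ha hb
  have hD := det_imCoords_quatCross h2 ha hb
  have hsnd : quatNorm a * quatNorm b = quatDot a b ^ 2 ↔ quatNorm (quatCross a b) = 0 := by
    rw [hN, sub_eq_zero]
  refine ⟨?_, hsnd⟩
  rw [hsnd, linearIndependent_iff_det_ne_zero ha hb (quatCross_re a b), not_not, ← hD,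
    mul_eq_zero_iff_left (mul_ne_zero hc₁ hc₂)]
end

section
/- Let F be a field of characteristic not 2, let λ, μ be nonzero elements of F, and let A, B be elements of (λ,μ / F) with N(A) ≠ 0, N(B) ≠ 0 and AB ≠ BA. If A is balanced, i.e. tr(A) = N(A) (and this common value is nonzero since N(A) ≠ 0 and A is invertible), and A·B = ½ tr(AB̄) = 0, then A and B satisfy the fundamental equation A⁻¹B⁻¹AB − BA⁻¹B⁻¹A = B⁻¹AB − A, where X⁻¹ = N(X)⁻¹·X̄; equivalently, ĀB̄AB − BĀB̄A = N(A)·(B̄AB) − N(A)N(B)·A. -/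
/-!
Write `n = N(A) = tr(A)` and `m = N(B)`. Orthogonality `A·B = 0` says both `B̄A = -ĀB` and
`BĀ = -AB̄`, and balancedness turns the characteristic equation of `Ā` into `Ā² = nĀ - n`. Hence

`ĀB̄AB - BĀB̄A = -Ā²B² + BĀ²B = n(-ĀB² + BĀB) = n(B̄AB - AB̄B) = n(B̄AB) - nmA`,

where the constant terms `±nB²` cancel. Dividing by `nm` gives the form with inverses, since
`X⁻¹ = N(X)⁻¹X̄`.
-/

open Quaternion

theorem self_mul_star_eq_quatNorm {F : Type*} [Field F] {c₁ c₂ : F} (A : ℍ[F, c₁, c₂]) :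
    A * star A = quatNorm A • (1 : ℍ[F, c₁, c₂]) := by
  ext <;> simp [quatNorm] <;> ring

theorem star_mul_self_eq_quatNorm {F : Type*} [Field F] {c₁ c₂ : F} (A : ℍ[F, c₁, c₂]) :
    star A * A = quatNorm A • (1 : ℍ[F, c₁, c₂]) := by
  ext <;> simp [quatNorm] <;> ring

theorem inverse_eq_quatNorm_inv_smul_star {F : Type*} [Field F] {c₁ c₂ : F}
    (A : ℍ[F, c₁, c₂]) (hA : quatNorm A ≠ 0) :
    Ring.inverse A = (quatNorm A)⁻¹ • star A := by
  refine Ring.inverse_unit (⟨A, (quatNorm A)⁻¹ • star A, ?_, ?_⟩ : (ℍ[F, c₁, c₂])ˣ)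
  · rw [mul_smul_comm, self_mul_star_eq_quatNorm, smul_smul, inv_mul_cancel₀ hA, one_smul]
  · rw [smul_mul_assoc, star_mul_self_eq_quatNorm, smul_smul, inv_mul_cancel₀ hA, one_smul]

/-- The characteristic equation of `Ā`. -/
theorem star_mul_star_eq {F : Type*} [Field F] {c₁ c₂ : F} (A : ℍ[F, c₁, c₂]) :
    star A * star A = (2 * A.re) • star A - quatNorm A • (1 : ℍ[F, c₁, c₂]) := by
  ext <;> simp [quatNorm] <;> ring

/-- `BĀ + AB̄` is the scalar `2(A·B)`, which vanishes here. -/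
theorem mul_star_eq_neg {F : Type*} [Field F] {c₁ c₂ : F} (A B : ℍ[F, c₁, c₂])
    (hdot : (A * star B).re = 0) : B * star A = -(A * star B) := by
  simp at hdot
  ext <;> simp
  · linear_combination 2 * hdot
  all_goals ring

/-- `B̄A + ĀB` is the same scalar `2(A·B) = 0`, because the trace is invariant under cyclic
permutation. -/
theorem star_mul_eq_neg {F : Type*} [Field F] {c₁ c₂ : F} (A B : ℍ[F, c₁, c₂])
    (hdot : (A * star B).re = 0) : star B * A = -(star A * B) := by
  simp at hdot
  ext <;> simp
  · linear_combination 2 * hdot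
  all_goals ring

/-- A matching pair of generalized quaternions (`A` balanced, `A·B = 0`) satisfies the
fundamental equation `A⁻¹B⁻¹AB − BA⁻¹B⁻¹A = B⁻¹AB − A`; equivalently, in quaternionic
form, `ĀB̄AB − BĀB̄A = N(A)(B̄AB) − N(A)N(B)A`. Here `tr(A) = 2a₀` and
`A·B = ½tr(AB̄) = (AB̄)₀`. -/
theorem matching_pair_satisfies_fundamental {F : Type*} [Field F] (h2 : (2 : F) ≠ 0)
    (c₁ c₂ : F) (hc₁ : c₁ ≠ 0) (hc₂ : c₂ ≠ 0) (A B : ℍ[F, c₁, c₂])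
    (hNA : quatNorm A ≠ 0) (hNB : quatNorm B ≠ 0)
    (hnc : A * B ≠ B * A)
    (hbal : 2 * A.re = quatNorm A)
    (hdot : (A * star B).re = 0) :
    Ring.inverse A * Ring.inverse B * A * B - B * Ring.inverse A * Ring.inverse B * A =
        Ring.inverse B * A * B - A ∧
      star A * star B * A * B - B * (star A * star B * A) =
        quatNorm A • (star B * A * B) - (quatNorm A * quatNorm B) • A := by
  have hsq := star_mul_star_eq A
  have hr := mul_star_eq_neg A B hdot
  have hl := star_mul_eq_neg A B hdot
  have hB := star_mul_self_eq_quatNorm B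
  rw [hbal] at hsq
  have key : star A * star B * A * B - B * (star A * star B * A) =
      quatNorm A • (star B * A * B) - (quatNorm A * quatNorm B) • A := by
    calc star A * star B * A * B - B * (star A * star B * A)
        = star A * (star B * A) * B - B * (star A * (star B * A)) := by simp only [mul_assoc]
      _ = B * (star A * star A) * B - star A * star A * B * B := by
          rw [hl]; noncomm_ring
      _ = quatNorm A • (B * star A * B) - quatNorm A • (star A * B * B) := by
          rw [hsq]
          simp only [mul_sub, sub_mul, mul_smul_comm, smul_mul_assoc, mul_one, one_mul]
          abel
      _ = quatNorm A • (star B * A * B) - quatNorm A • (A * (star B * B)) := by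
          rw [hl, hr]
          simp only [neg_mul, smul_neg, mul_assoc]
          abel
      _ = _ := by rw [hB, mul_smul_comm, mul_one, smul_smul]
  refine ⟨?_, key⟩
  rw [inverse_eq_quatNorm_inv_smul_star A hNA, inverse_eq_quatNorm_inv_smul_star B hNB]
  have h := congrArg (fun X => ((quatNorm A)⁻¹ * (quatNorm B)⁻¹) • X) key
  simp only [smul_sub, smul_smul] at h
  have e1 : (quatNorm A)⁻¹ * (quatNorm B)⁻¹ * quatNorm A = (quatNorm B)⁻¹ := by field_simp
  have e2 : (quatNorm A)⁻¹ * (quatNorm B)⁻¹ * (quatNorm A * quatNorm B) = 1 := by field_simp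
  rw [e1, e2, one_smul] at h
  simp only [smul_mul_assoc, mul_smul_comm, smul_smul, mul_assoc] at h ⊢
  rwa [mul_comm (quatNorm B)⁻¹ (quatNorm A)⁻¹]
end

section
/- Let F be a field of characteristic not 2, let λ, μ be nonzero elements of F, and suppose the generalized quaternion algebra (λ,μ / F) is anisotropic, i.e. N(X) = 0 implies X = 0. Let A, B be nonzero elements of (λ,μ / F) with AB ≠ BA satisfying ĀB̄AB − BĀB̄A = N(A)·(B̄AB) − N(A)N(B)·A (the quaternionic form of the fundamental equation A⁻¹B⁻¹AB − BA⁻¹B⁻¹A = B⁻¹AB − A). Then tr(A) = N(A) and A·B = 0; that is, A, B form a matching pair. -/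
/-!
Write `n = N(A)`, `t = tr(A)`, `s = tr(A * star B)`, and let `X` be the difference of the two sides
of the fundamental equation, so that `X = 0`. The bilinear form of `X` with `A` factors, for all
`A` and `B`, as `2 (X·A) = -(t - n) * N(AB - BA)` (`two_mul_fundamental_dot`). Since `AB ≠ BA` and
the norm is anisotropic, this gives `t = n`. Moreover `X = (t - n) Y - s (AB - BA)` for an explicit
quaternion `Y` (`fundamental_eq_smul_commutator`), so `t = n` leaves `s (AB - BA) = 0`, and `s = 0`.
-/

open Quaternion

section Helpers

variable {F : Type*} [Field F] {c₁ c₂ : F}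

/-- The part of the fundamental equation in the direction of `A`; the real part of `X * star A` is
the bilinear form `X·A`. For invertible `B`, with `p` the pure part of `B⁻¹AB` and `a` that of `A`,
both sides are multiples of `(t - n) * N(p - a)`, as the cross products in `X` are orthogonal to
`a`. -/
lemma two_mul_fundamental_dot (A B : ℍ[F, c₁, c₂]) :
    2 * ((star A * star B * A * B - B * (star A * star B * A) -
      (quatNorm A • (star B * A * B) - (quatNorm A * quatNorm B) • A)) * star A).re =
      -((2 * A.re - quatNorm A) * quatNorm (A * B - B * A)) := by
  simp [quatNorm]
  ring

/-- The fundamental equation with the factor `t - n` split off; the remainder is a multiple of the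
commutator. It follows from `star A = t - A`, which turns `X` into
`(t - n) • (star B * A * B - N(B) • A) - (A * star B * A * B - B * A * star B * A)`, and from
`A * star B + B * star A = s = star B * A + star A * B`. -/
lemma fundamental_eq_smul_commutator (A B : ℍ[F, c₁, c₂]) :
    star A * star B * A * B - B * (star A * star B * A) -
      (quatNorm A • (star B * A * B) - (quatNorm A * quatNorm B) • A) =
      (2 * A.re - quatNorm A) • (star B * A * B - quatNorm B • A) -
        (2 * (A * star B).re) • (A * B - B * A) := by
  ext <;> simp [quatNorm] <;> ring

end Helpers

theorem fundamental_implies_matching {F : Type*} [Field F] (h2 : (2 : F) ≠ 0)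
    (c₁ c₂ : F) (hc₁ : c₁ ≠ 0) (hc₂ : c₂ ≠ 0)
    (haniso : ∀ X : ℍ[F, c₁, c₂], quatNorm X = 0 → X = 0)
    (A B : ℍ[F, c₁, c₂]) (hA : A ≠ 0) (hB : B ≠ 0)
    (hnc : A * B ≠ B * A)
    (hfund : star A * star B * A * B - B * (star A * star B * A) =
      quatNorm A • (star B * A * B) - (quatNorm A * quatNorm B) • A) :
    2 * A.re = quatNorm A ∧ (A * star B).re = 0 := by
  have hcomm : A * B - B * A ≠ 0 := sub_ne_zero.mpr hnc
  have htr : 2 * A.re = quatNorm A := by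
    have h := two_mul_fundamental_dot A B
    rw [sub_eq_zero.mpr hfund, zero_mul, QuaternionAlgebra.re_zero, mul_zero, eq_comm,
      neg_eq_zero, mul_eq_zero] at h
    exact sub_eq_zero.mp (h.resolve_right fun h0 => hcomm (haniso _ h0))
  refine ⟨htr, ?_⟩
  have h := fundamental_eq_smul_commutator A B
  rw [sub_eq_zero.mpr hfund, sub_eq_zero.mpr htr, zero_smul, zero_sub, eq_comm, neg_eq_zero, smul_eq_zero] at h
  exact (mul_eq_zero.mp (h.resolve_right hcomm)).resolve_left h2
end

section
/- Let F be a field of characteristic not 2 and let a, b, c ∈ F with a ≠ 0, a ≠ 1 and c ≠ 0. In M₂(F) set A = [[a, 0],[0, a/(a−1)]] and B = [[b, c],[(b² + a − 1)/(c(1−a)), b/(1−a)]]. Then det B = 1, tr A = det A, A·adj(B) + B·adj(A) = 0 (where adj denotes the adjugate matrix), the matrices A, A − I and B are invertible, and A, B satisfy the fundamental equation A⁻¹B⁻¹AB − BA⁻¹B⁻¹A = B⁻¹AB − A. -/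
/-!
The fundamental equation holds for every matching pair with `det B = 1` and `d = det A ≠ 0`; the
explicit matrices only have to be checked to form such a pair.

Here `adj B = B⁻¹`, so multiplying the matching condition by `A` on the right gives
`A B⁻¹ A = -d B`; in particular `A B⁻¹ A` commutes with `B`. Since `tr A = d`, also
`adj A = d - A`, that is, `A⁻¹ = 1 - d⁻¹ A`. Substituting this for `A⁻¹` on the left-hand side of
the fundamental equation leaves `B⁻¹ A B - A` plus `d⁻¹` times the commutator of `B` with
`A B⁻¹ A`, which vanishes.
-/

theorem inv_eq_one_sub_of_trace_eq_det {F : Type*} [Field F] (A : Matrix (Fin 2) (Fin 2) F)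
    (hd : A.det ≠ 0) (ht : A.trace = A.det) : A⁻¹ = 1 - A.det⁻¹ • A := by
  have hadj : A.adjugate = A.det • (1 : Matrix (Fin 2) (Fin 2) F) - A := by
    rw [← ht]
    ext i j
    fin_cases i <;> fin_cases j <;>
      simp [Matrix.adjugate_fin_two, Matrix.trace_fin_two]
  rw [Matrix.inv_def, Ring.inverse_eq_inv', hadj, smul_sub, smul_smul, inv_mul_cancel₀ hd,
    one_smul]

theorem mul_inv_mul_of_matching {F : Type*} [Field F] (A B : Matrix (Fin 2) (Fin 2) F)
    (hB : B.det = 1) (hm : A * B.adjugate + B * A.adjugate = 0) :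
    A * B⁻¹ * A = -(A.det • B) := by
  have hBinv : B⁻¹ = B.adjugate := by simp [Matrix.inv_def, hB]
  rw [hBinv, eq_neg_of_add_eq_zero_left hm, neg_mul, Matrix.mul_assoc, Matrix.adjugate_mul,
    Matrix.mul_smul, Matrix.mul_one]

theorem fundamental_of_matching {F : Type*} [Field F] (A B : Matrix (Fin 2) (Fin 2) F)
    (hd : A.det ≠ 0) (hB : B.det = 1) (ht : A.trace = A.det)
    (hm : A * B.adjugate + B * A.adjugate = 0) :
    A⁻¹ * B⁻¹ * A * B - B * A⁻¹ * B⁻¹ * A = B⁻¹ * A * B - A := by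
  have hABA := mul_inv_mul_of_matching A B hB hm
  have hBB : B * B⁻¹ = 1 := Matrix.mul_nonsing_inv B (by simp [hB])
  have h₁ : A⁻¹ * B⁻¹ * A * B = B⁻¹ * A * B - A.det⁻¹ • (A * B⁻¹ * A * B) := by
    rw [inv_eq_one_sub_of_trace_eq_det A hd ht]
    simp only [sub_mul, one_mul, smul_mul_assoc]
  have h₂ : B * A⁻¹ * B⁻¹ * A = A - A.det⁻¹ • (B * (A * B⁻¹ * A)) := by
    rw [inv_eq_one_sub_of_trace_eq_det A hd ht]
    simp only [sub_mul, mul_sub, mul_one, hBB, one_mul, smul_mul_assoc, mul_smul_comm, mul_assoc]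
  have hcomm : B * (A * B⁻¹ * A) = A * B⁻¹ * A * B := by
    rw [hABA]
    simp
  rw [h₁, h₂, hcomm]
  abel

/-- The general matching pair with `A` having two distinct eigenvalues (case 1):
`A = [[a,0],[0,a/(a-1)]]`, `B = [[b,c],[(b²+a−1)/(c(1−a)), b/(1−a)]]` is a matching
pair, `A`, `A − 1`, `B` are invertible and `A, B` satisfy the fundamental equation. -/
theorem matching_pair_case_two_eigenvalues {F : Type*} [Field F] (h2 : (2 : F) ≠ 0)
    (a b c : F) (ha0 : a ≠ 0) (ha1 : a ≠ 1) (hc : c ≠ 0)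
    (A B : Matrix (Fin 2) (Fin 2) F)
    (hA : A = !![a, 0; 0, a / (a - 1)])
    (hB : B = !![b, c; (b ^ 2 + a - 1) / (c * (1 - a)), b / (1 - a)]) :
    B.det = 1 ∧
      A.trace = A.det ∧
      A * B.adjugate + B * A.adjugate = 0 ∧
      IsUnit A ∧ IsUnit (A - 1) ∧ IsUnit B ∧
      A⁻¹ * B⁻¹ * A * B - B * A⁻¹ * B⁻¹ * A = B⁻¹ * A * B - A := by
  have h1 : a - 1 ≠ 0 := sub_ne_zero.mpr ha1
  have h1' : 1 - a ≠ 0 := sub_ne_zero.mpr ha1.symm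
  have hBdet : B.det = 1 := by
    rw [hB, Matrix.det_fin_two_of]
    field_simp
    ring
  have hAdet : A.det ≠ 0 := by
    rw [hA, Matrix.det_fin_two_of]
    simp [ha0, h1]
  have htr : A.trace = A.det := by
    rw [hA, Matrix.det_fin_two_of, Matrix.trace_fin_two_of]
    field_simp
    ring
  have hA1det : (A - 1).det = 1 := by
    rw [hA, Matrix.det_fin_two]
    simp
    field_simp
    ring
  -- The two terms are adjugate to each other, so their sum is the scalar `tr (A * adj B)`.
  have hm : A * B.adjugate + B * A.adjugate = 0 := by
    have hdiag : a * (b / (1 - a)) + b * (a / (a - 1)) = 0 := by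
      rw [← neg_sub a 1]
      field_simp
      ring
    rw [hA, hB, Matrix.adjugate_fin_two_of, Matrix.adjugate_fin_two_of]
    ext i j
    fin_cases i <;> fin_cases j <;> simp
    · exact hdiag
    · ring
    · ring
    · linear_combination hdiag
  refine ⟨hBdet, htr, hm, ?_, ?_, ?_, fundamental_of_matching A B hAdet hBdet htr hm⟩
  · exact (Matrix.isUnit_iff_isUnit_det A).mpr hAdet.isUnit
  · exact (Matrix.isUnit_iff_isUnit_det _).mpr (by simp [hA1det])
  · exact (Matrix.isUnit_iff_isUnit_det B).mpr (by simp [hBdet])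
end

section
/- Let R be an associative ring with 1, let A, B be units of R with A − 1 a unit, satisfying the fundamental equation A⁻¹B⁻¹AB − BA⁻¹B⁻¹A = B⁻¹AB − A, and set C = A⁻¹B⁻¹A(1 − A), D = 1 − A⁻¹B⁻¹AB, P = A⁻¹B⁻¹A and Q = B⁻¹(1 − A). Fix n ≥ 2 and for 0 ≤ i ≤ n − 2 let S_i be the n×n matrix over R agreeing with the identity matrix except that its 2×2 block in rows and columns i, i+1 equals [[A, B],[C, D]]. Then the row vector v = (P^{n−1}, P^{n−2}, …, P, 1) satisfies v·S_i = v for every i, and the column vector w = (1, Q, Q², …, Q^{n−1})ᵀ satisfies S_i·w = w for every i. -/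
/-- A row vector is fixed by `braidGen n i X` as soon as its entries at `i, i+1` form a row
vector fixed by the `2 × 2` block `X`. -/
theorem braidGen_vecMul_eq {R : Type*} [Ring R] {n i : ℕ} (hi : i + 1 < n)
    (X : Matrix (Fin 2) (Fin 2) R) (v : Fin n → R)
    (h0 : v ⟨i, by omega⟩ * X 0 0 + v ⟨i + 1, hi⟩ * X 1 0 = v ⟨i, by omega⟩)
    (h1 : v ⟨i, by omega⟩ * X 0 1 + v ⟨i + 1, hi⟩ * X 1 1 = v ⟨i + 1, hi⟩) :
    Matrix.vecMul v (braidGen n i X) = v := by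
  have hi' : i < n := by omega
  have hne : (⟨i, hi'⟩ : Fin n) ≠ ⟨i + 1, hi⟩ := by simp
  funext c
  simp only [Matrix.vecMul, dotProduct]
  by_cases hc : (c : ℕ) = i
  · obtain rfl : c = ⟨i, hi'⟩ := Fin.ext hc
    rw [Fintype.sum_eq_add _ _ hne]
    · simpa [braidGen] using h0
    · rintro x ⟨hx, hx'⟩
      simp only [ne_eq, Fin.ext_iff] at hx hx'
      simp [braidGen, Fin.ext_iff, hx, hx']
  by_cases hc' : (c : ℕ) = i + 1
  · obtain rfl : c = ⟨i + 1, hi⟩ := Fin.ext hc'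
    rw [Fintype.sum_eq_add _ _ hne]
    · simpa [braidGen] using h1
    · rintro x ⟨hx, hx'⟩
      simp only [ne_eq, Fin.ext_iff] at hx hx'
      simp [braidGen, Fin.ext_iff, hx, hx']
  · simp [braidGen, hc, hc']

/-- A column vector is fixed by `braidGen n i X` as soon as its entries at `i, i+1` form a
column vector fixed by the `2 × 2` block `X`. -/
theorem braidGen_mulVec_eq {R : Type*} [Ring R] {n i : ℕ} (hi : i + 1 < n)
    (X : Matrix (Fin 2) (Fin 2) R) (w : Fin n → R)
    (h0 : X 0 0 * w ⟨i, by omega⟩ + X 0 1 * w ⟨i + 1, hi⟩ = w ⟨i, by omega⟩)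
    (h1 : X 1 0 * w ⟨i, by omega⟩ + X 1 1 * w ⟨i + 1, hi⟩ = w ⟨i + 1, hi⟩) :
    Matrix.mulVec (braidGen n i X) w = w := by
  have hi' : i < n := by omega
  have hne : (⟨i, hi'⟩ : Fin n) ≠ ⟨i + 1, hi⟩ := by simp
  funext r
  simp only [Matrix.mulVec, dotProduct]
  by_cases hr : (r : ℕ) = i
  · obtain rfl : r = ⟨i, hi'⟩ := Fin.ext hr
    rw [Fintype.sum_eq_add _ _ hne]
    · simpa [braidGen] using h0
    · rintro x ⟨hx, hx'⟩
      simp only [ne_eq, Fin.ext_iff] at hx hx'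
      simp [braidGen, Fin.ext_iff, hx, hx', Ne.symm hx]
  by_cases hr' : (r : ℕ) = i + 1
  · obtain rfl : r = ⟨i + 1, hi⟩ := Fin.ext hr'
    rw [Fintype.sum_eq_add _ _ hne]
    · simpa [braidGen] using h1
    · rintro x ⟨hx, hx'⟩
      simp only [ne_eq, Fin.ext_iff] at hx hx'
      simp [braidGen, Fin.ext_iff, hx, hx', Ne.symm hx']
  · simp [braidGen, hr, hr']

/-- With `P = A⁻¹B⁻¹A` and `Q = B⁻¹(1−A)`, the row vector `(P^{n−1},…,P,1)` is a left
fixed vector and the column vector `(1,Q,…,Q^{n−1})ᵀ` a right fixed vector of every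
braid generator matrix `S_i` built from the non-commuting switch `S = [[A,B],[C,D]]`. -/
theorem fixed_vectors_of_switch_rep {R : Type*} [Ring R] (A B : Rˣ)
    (hA1 : IsUnit ((A : R) - 1))
    (hfund : (↑A⁻¹ * ↑B⁻¹ * ↑A * ↑B - ↑B * ↑A⁻¹ * ↑B⁻¹ * ↑A : R) =
      ↑B⁻¹ * ↑A * ↑B - ↑A)
    (C D P Q : R)
    (hC : C = ↑A⁻¹ * ↑B⁻¹ * ↑A * (1 - ↑A))
    (hD : D = 1 - ↑A⁻¹ * ↑B⁻¹ * ↑A * ↑B)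
    (hP : P = ↑A⁻¹ * ↑B⁻¹ * (A : R))
    (hQ : Q = ↑B⁻¹ * (1 - (A : R)))
    (n : ℕ) (hn : 2 ≤ n) :
    (∀ i : ℕ, i ≤ n - 2 →
        Matrix.vecMul (fun r : Fin n => P ^ (n - 1 - (r : ℕ)))
            (braidGen n i !![(A : R), (B : R); C, D]) =
          fun r : Fin n => P ^ (n - 1 - (r : ℕ))) ∧
      (∀ i : ℕ, i ≤ n - 2 →
        Matrix.mulVec (braidGen n i !![(A : R), (B : R); C, D])
            (fun c : Fin n => Q ^ (c : ℕ)) =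
          fun c : Fin n => Q ^ (c : ℕ)) := by
  rw [← hP] at hC hD
  have hBQ : (B : R) * Q = 1 - A := by rw [hQ, Units.mul_inv_cancel_left]
  have hPA : P * A + C = P := by rw [hC]; noncomm_ring
  have hPB : P * B + D = 1 := by rw [hD]; noncomm_ring
  have hAB : A + B * Q = 1 := by rw [hBQ]; noncomm_ring
  have hCD : C + D * Q = Q := by
    rw [hC, hD, sub_mul, mul_assoc P, hBQ]; noncomm_ring
  refine ⟨fun i hi => braidGen_vecMul_eq (by omega) _ _ ?_ ?_,
    fun i hi => braidGen_mulVec_eq (by omega) _ _ ?_ ?_⟩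
  · have hk : n - 1 - i = n - 1 - (i + 1) + 1 := by omega
    simp [hk, pow_succ, mul_assoc, ← mul_add, hPA]
  · have hk : n - 1 - i = n - 1 - (i + 1) + 1 := by omega
    simp [hk, pow_succ, mul_assoc, ← mul_add, hPB]
  · simp [pow_succ', ← mul_assoc, ← add_mul, hAB]
  · simp [pow_succ', ← mul_assoc, ← add_mul, hCD]
end

section
/- Let R be an associative ring with 1 and let A, B be units of R. Set C = A⁻¹B⁻¹A(1 − A) and D = 1 − A⁻¹B⁻¹AB. Then in M₂(R) the matrix [[A, B],[C, D]] factors as the product of elementary matrices [[A, 0],[0, 1]] · [[1, 0],[C, 1]] · [[1, 0],[0, 1 − A⁻¹]] · [[1, A⁻¹B],[0, 1]]. -/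
/-- The lower-right entry of the product: since `A(1 − A)A⁻¹ = 1 − A`, the term `C A⁻¹B`
collapses to `A⁻¹ − A⁻¹B⁻¹AB`, and adding `1 − A⁻¹` gives `D`. -/
theorem switch_lower_right {R : Type*} [Ring R] (A B : Rˣ) :
    (↑A⁻¹ * ↑B⁻¹ * ↑A * (1 - ↑A) : R) * (↑A⁻¹ * ↑B) + (1 - ↑A⁻¹) =
      1 - ↑A⁻¹ * ↑B⁻¹ * ↑A * ↑B := by
  have h : (↑A⁻¹ * ↑B⁻¹ * ↑A * (1 - ↑A) : R) * (↑A⁻¹ * ↑B) =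
      ↑A⁻¹ - ↑A⁻¹ * ↑B⁻¹ * ↑A * ↑B := by
    simp [mul_sub, sub_mul, mul_assoc]
  rw [h]
  abel

/-- The switch matrix `S = [[A,B],[C,D]]` with `C = A⁻¹B⁻¹A(1−A)` and
`D = 1 − A⁻¹B⁻¹AB` factors as a product of elementary matrices. -/
theorem switch_factors_as_elementary {R : Type*} [Ring R] (A B : Rˣ)
    (C D : R)
    (hC : C = ↑A⁻¹ * ↑B⁻¹ * ↑A * (1 - ↑A))
    (hD : D = 1 - ↑A⁻¹ * ↑B⁻¹ * ↑A * ↑B) :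
    (!![(A : R), (B : R); C, D] : Matrix (Fin 2) (Fin 2) R) =
      !![(A : R), 0; 0, 1] * !![1, 0; C, 1] * !![1, 0; 0, 1 - (↑A⁻¹ : R)] *
        !![1, (↑A⁻¹ : R) * (B : R); 0, 1] := by
  subst hC hD
  rw [← switch_lower_right A B]
  simp
end
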